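/- Every left-full computable instance of the cross-constraint problem has a solution (X⁰,Y⁰), (X¹,Y¹) with (X⁰,Y⁰) ⊕ (X¹,Y¹) ≤_T ∅′. -/

import Mathlib

namespace Paper

/-- Codes for oracle Turing machines. -/
inductive OCode : Type
  | zero | succ | left | right | oracle
  | pair (a b : OCode) | comp (a b : OCode) | prec (a b : OCode) | rfind' (a : OCode)

/-- Evaluation of an oracle code with oracle `O`. -/
def oeval (O : ℕ → ℕ) : OCode → ℕ →. ℕ
  | .zero => pure 0
  | .succ => Nat.succ
  | .left => ↑fun n : ℕ => n.unpair.1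
  | .right => ↑fun n : ℕ => n.unpair.2
  | .oracle => ↑fun n : ℕ => O n
  | .pair cf cg => fun n => Nat.pair <$> oeval O cf n <*> oeval O cg n
  | .comp cf cg => fun n => oeval O cg n >>= oeval O cf
  | .prec cf cg =>
    Nat.unpaired fun a n =>
      n.rec (oeval O cf a) fun y IH => do
        let i ← IH
        oeval O cg (Nat.pair a (Nat.pair y i))
  | .rfind' cf =>
    Nat.unpaired fun a m =>
      (Nat.rfind fun n => (fun m => m = 0) <$> oeval O cf (Nat.pair a (n + m))).map (· + m)

/-- A numbering of oracle codes. -/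
def encodeOCode : OCode → ℕ
  | .zero => 0
  | .succ => 1
  | .left => 2
  | .right => 3
  | .oracle => 4
  | .pair a b => 4 * Nat.pair (encodeOCode a) (encodeOCode b) + 5
  | .comp a b => 4 * Nat.pair (encodeOCode a) (encodeOCode b) + 6
  | .prec a b => 4 * Nat.pair (encodeOCode a) (encodeOCode b) + 7
  | .rfind' a => 4 * encodeOCode a + 8

/-- The Turing jump of an oracle. -/
def jump (O : ℕ → ℕ) : Set ℕ :=
  { n | ∃ c : OCode, encodeOCode c = n.unpair.1 ∧ (oeval O c n.unpair.2).Dom }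

/-- `f` is (total) recursive in the oracle `O`. -/
def RecIn (O : ℕ → ℕ) (f : ℕ → ℕ) : Prop :=
  ∃ c : OCode, ∀ n, oeval O c n = Part.some (f n)

/-- The all-zero (trivial, computable) oracle. -/
def zeroO : ℕ → ℕ := fun _ => 0

/-- Characteristic function of a set of naturals. -/
noncomputable def chi (A : Set ℕ) : ℕ → ℕ := A.indicator fun _ => 1

/-- Turing join of two oracles. -/
def joinF (f g : ℕ → ℕ) : ℕ → ℕ := fun n => if n % 2 = 0 then f (n / 2) else g (n / 2)

/-- `A` is Σ⁰₁ relative to the oracle `O` (c.e. in `O`). -/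
def SigmaIn (O : ℕ → ℕ) (A : Set ℕ) : Prop :=
  ∃ c : OCode, ∀ n, n ∈ A ↔ (oeval O c n).Dom

/-- The halting problem `∅′`. -/
noncomputable def emptyJump : Set ℕ := jump zeroO

end Paper
namespace Paper

abbrev Str3 := List (Fin 3)
abbrev StrTup (r : ℕ) := Fin r → List (Fin 2)

/-- A cross-tree `T ⊆ 3^{<ℕ} × (2^{<ℕ})^r`. -/
structure CrossTree (r : ℕ) where
  mem : Set (Str3 × StrTup r)
  len_eq : ∀ p ∈ mem, ∀ i j : Fin r, (p.2 i).length = (p.2 j).length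
  len_le : ∀ p ∈ mem, ∀ i : Fin r, (p.2 i).length ≤ p.1.length
  closed : ∀ p ∈ mem, ∀ q : Str3 × StrTup r, q.1 <+: p.1 → (∀ i, q.2 i <+: p.2 i) →
    (∀ i j : Fin r, (q.2 i).length = (q.2 j).length) →
    (∀ i : Fin r, (q.2 i).length ≤ q.1.length) → q ∈ mem

/-- Length-`n` initial segment of an infinite sequence. -/
def seg {α : Type} (X : ℕ → α) (n : ℕ) : List α := List.ofFn fun i : Fin n => X i

/-- `(X, Y)` is an infinite path of the cross-tree `T`. -/
def IsPath {r : ℕ} (T : CrossTree r) (X : ℕ → Fin 3) (Y : Fin r → ℕ → Fin 2) : Prop :=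
  ∀ n, (seg X n, fun i => seg (Y i) n) ∈ T.mem

/-- The infinite sequence `X` extends the finite string `ρ`. -/
def ExtendsL {α : Type} (X : ℕ → α) (ρ : List α) : Prop :=
  ∀ i : Fin ρ.length, X i = ρ.get i

/-- `T` is left-full below `(ρ, σ)`. -/
def LeftFullBelow {r : ℕ} (T : CrossTree r) (ρ : Str3) (σ : StrTup r) : Prop :=
  ∀ X : ℕ → Fin 3, ExtendsL X ρ →
    ∃ Y : Fin r → ℕ → Fin 2, (∀ i, ExtendsL (Y i) (σ i)) ∧ IsPath T X Y

/-- `T` is left-full (below the pair of empty stems). -/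
def LeftFull {r : ℕ} (T : CrossTree r) : Prop := LeftFullBelow T [] fun _ => []

/-- Encoding of nodes of a cross-tree as natural numbers. -/
def encNode {r : ℕ} (p : Str3 × StrTup r) : ℕ :=
  Nat.pair (Encodable.encode p.1) (Encodable.encode (List.ofFn p.2))

/-- The cross-tree `T` is computable. -/
def TreeComputable {r : ℕ} (T : CrossTree r) : Prop :=
  RecIn zeroO (chi {n | ∃ p ∈ T.mem, encNode p = n})

/-- A solution to the cross-constraint problem on instance `T`: a pair of paths whose
first components are finitely compatible and whose second components are pairwise
infinitely compatible. -/
def CCSolution {r : ℕ} (T : CrossTree r) (X : Fin 2 → ℕ → Fin 3)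
    (Y : Fin 2 → Fin r → ℕ → Fin 2) : Prop :=
  (∀ i : Fin 2, IsPath T (X i) (Y i)) ∧
  (∀ j : Fin 3, {n | X 0 n = j ∧ X 1 n = j}.Finite) ∧
  (∀ s : Fin r, ∃ j : Fin 2, {n | Y 0 s n = j ∧ Y 1 s n = j}.Infinite)

/-- Oracle encoding a path `(X, Y)` of a cross-tree. -/
def solOracle {r : ℕ} (X : ℕ → Fin 3) (Y : Fin r → ℕ → Fin 2) : ℕ → ℕ := fun n =>
  if n.unpair.1 = 0 then (X n.unpair.2 : ℕ)
  else if h : n.unpair.1 - 1 < r then (Y ⟨n.unpair.1 - 1, h⟩ n.unpair.2 : ℕ) else 0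

end Paper

namespace Paper

/-! ### Combinatorial part -/

section Comb

/-- Finite condition: the first `k` values of `X` and the first `l` values of `Y`. -/
structure Cond (r : ℕ) where
  k : ℕ
  X : ℕ → Fin 3
  l : ℕ
  Y : Fin r → ℕ → Fin 2

variable {r : ℕ}

def Cond.Ext (p q : Cond r) : Prop :=
  p.k ≤ q.k ∧ (∀ j < p.k, q.X j = p.X j) ∧ p.l ≤ q.l ∧ ∀ i, ∀ j < p.l, q.Y i j = p.Y i j

theorem Cond.Ext.rfl' (p : Cond r) : p.Ext p := ⟨le_rfl, fun _ _ => rfl, le_rfl, fun _ _ _ => rfl⟩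

theorem Cond.Ext.trans {p q s : Cond r} (h : p.Ext q) (h' : q.Ext s) : p.Ext s := by
  obtain ⟨h1, h2, h3, h4⟩ := h
  obtain ⟨h1', h2', h3', h4'⟩ := h'
  refine ⟨h1.trans h1', fun j hj => ?_, h3.trans h3', fun i j hj => ?_⟩
  · rw [h2' j (by omega), h2 j hj]
  · rw [h4' i j (by omega), h4 i j hj]

/-- Abstract tree predicate. -/
structure TP (r : ℕ) where
  P : (ℕ → Fin 3) → (Fin r → ℕ → Fin 2) → ℕ → Prop
  mono : ∀ X Y m n, m ≤ n → P X Y n → P X Y m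
  loc : ∀ X X' Y n, (∀ j < n, X j = X' j) → P X Y n → P X' Y n

variable (T : TP r)

def Good (p : Cond r) : Prop :=
  ∀ X : ℕ → Fin 3, (∀ j < p.k, X j = p.X j) → ∀ n,
    ∃ Y : Fin r → ℕ → Fin 2, (∀ i, ∀ j < p.l, Y i j = p.Y i j) ∧ T.P X Y n

variable {T}

theorem Good.raise {p : Cond r} (h : Good T p) (k : ℕ) (X : ℕ → Fin 3) (hk : p.k ≤ k)
    (hX : ∀ j < p.k, X j = p.X j) : Good T ⟨k, X, p.l, p.Y⟩ := by
  intro X' hX' n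
  refine h X' (fun j hj => ?_) n
  exact (hX' j (lt_of_lt_of_le hj hk)).trans (hX j hj)

theorem Good.density1 {p : Cond r} (h : Good T p) :
    ∃ q, p.Ext q ∧ Good T q ∧ q.l = p.l + 1 := by
  by_contra hcon
  push Not at hcon
  let Yv : (Fin r → Fin 2) → Fin r → ℕ → Fin 2 := fun v i j => if j < p.l then p.Y i j else v i
  have key : ∀ F : Finset (Fin r → Fin 2), ∃ k, ∃ X : ℕ → Fin 3, p.k ≤ k ∧
      (∀ j < p.k, X j = p.X j) ∧ ∀ v ∈ F, ∃ n ≤ k, ∀ Y : Fin r → ℕ → Fin 2,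
        (∀ i, ∀ j < p.l + 1, Y i j = Yv v i j) → ¬ T.P X Y n := by
    intro F
    induction F using Finset.induction_on with
    | empty => exact ⟨p.k, p.X, le_rfl, fun _ _ => rfl, by simp⟩
    | insert v F _ ih =>
      obtain ⟨k, X, hk, hX, hF⟩ := ih
      have hng : ¬ Good T ⟨k, X, p.l + 1, Yv v⟩ := by
        intro hg
        refine hcon _ ⟨hk, hX, Nat.le_succ _, ?_⟩ hg rfl
        intro i j hj
        simp [Yv, hj]
      unfold Good at hng
      push Not at hng
      obtain ⟨X', hX', n, hn⟩ := hng
      simp only at hX' hn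
      refine ⟨max k n, X', le_trans hk (le_max_left _ _), fun j hj => ?_, ?_⟩
      · rw [hX' j (by omega), hX j hj]
      · intro w hw
        rcases Finset.mem_insert.1 hw with rfl | hw
        · exact ⟨n, le_max_right _ _, fun Y hY => hn Y hY⟩
        · obtain ⟨m, hm, hmY⟩ := hF w hw
          refine ⟨m, le_trans hm (le_max_left _ _), fun Y hY hP => hmY Y hY ?_⟩
          exact T.loc X' X Y m (fun j hj => hX' j (by omega)) hP
  obtain ⟨k, X, hk, hX, hF⟩ := key Finset.univ
  obtain ⟨Y, hY, hP⟩ := h X hX k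
  obtain ⟨n, hn, hnY⟩ := hF (fun i => Y i p.l) (Finset.mem_univ _)
  refine hnY Y ?_ (T.mono _ _ _ _ hn hP)
  intro i j hj
  by_cases hj' : j < p.l
  · simp [Yv, hj', hY i j hj']
  · have : j = p.l := by omega
    simp [Yv, this]

theorem Good.density {p : Cond r} (h : Good T p) (L : ℕ) (hL : p.l ≤ L) :
    ∃ q, p.Ext q ∧ Good T q ∧ q.l = L := by
  induction L, hL using Nat.le_induction with
  | base => exact ⟨p, .rfl' p, h, rfl⟩
  | succ L _ ih =>
    obtain ⟨q, hq, hg, rfl⟩ := ih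
    obtain ⟨q', hq', hg', h'⟩ := hg.density1
    exact ⟨q', hq.trans hq', hg', h'⟩

/-- `(q0, q1)` extends `(p0, p1)`, with equal first lengths and disjoint new first parts. -/
def DExt (p0 p1 q0 q1 : Cond r) : Prop :=
  p0.Ext q0 ∧ p1.Ext q1 ∧ q0.k = q1.k ∧ ∀ j, p0.k ≤ j → j < q0.k → q0.X j ≠ q1.X j

theorem DExt.trans {p0 p1 q0 q1 s0 s1 : Cond r} (h : DExt p0 p1 q0 q1) (h' : DExt q0 q1 s0 s1) :
    DExt p0 p1 s0 s1 := by
  obtain ⟨a, b, c, d⟩ := h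
  obtain ⟨a', b', c', d'⟩ := h'
  refine ⟨a.trans a', b.trans b', c', fun j hj hj' => ?_⟩
  by_cases hq : j < q0.k
  · rw [a'.2.1 j hq, b'.2.1 j (by omega)]
    exact d j hj hq
  · exact d' j (by omega) hj'

theorem fin3_add_ne (a : Fin 3) : a + 1 ≠ a := by decide +revert
theorem fin3_third (a b : Fin 3) : ∃ c : Fin 3, c ≠ a ∧ c ≠ b := by decide +revert
theorem fin2_pig (a b c : Fin 2) (h : a ≠ b) : a = c ∨ b = c := by decide +revert

theorem dext_long {p0 p1 : Cond r} (h0 : Good T p0) (h1 : Good T p1) (hk : p0.k = p1.k)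
    (L : ℕ) (hL0 : p0.l ≤ L) (hL1 : p1.l ≤ L) :
    ∃ q0 q1, DExt p0 p1 q0 q1 ∧ Good T q0 ∧ Good T q1 ∧ q0.l = L ∧ q1.l = L ∧ L ≤ q0.k := by
  obtain ⟨a, ha, hag, hal⟩ := h0.density L hL0
  let X1 : ℕ → Fin 3 := fun j => if j < p1.k then p1.X j else a.X j + 1
  have hak : p0.k ≤ a.k := ha.1
  have hg1 := h1.raise (a.k) X1 (by omega) (fun j hj => by simp [X1, hj])
  obtain ⟨b, hb, hbg, hbl⟩ := hg1.density L hL1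
  have hbk : a.k ≤ b.k := hb.1
  have hbX : ∀ j < a.k, b.X j = X1 j := hb.2.1
  let X0 : ℕ → Fin 3 := fun j => if j < a.k then a.X j else b.X j + 1
  have hX0 : ∀ j < a.k, X0 j = a.X j := fun j hj => by simp [X0, hj]
  refine ⟨⟨max b.k L, X0, a.l, a.Y⟩, ⟨max b.k L, b.X, b.l, b.Y⟩, ⟨?_, ?_, rfl, ?_⟩,
    hag.raise _ _ (by omega) hX0, hbg.raise _ _ (by omega) (fun _ _ => rfl), hal, hbl,
    le_max_right _ _⟩
  · exact ha.trans ⟨by simp only; omega, hX0, le_rfl, fun _ _ _ => rfl⟩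
  · refine Cond.Ext.trans (q := b) ⟨by omega, ?_, hb.2.2⟩
      ⟨le_max_left _ _, fun _ _ => rfl, le_rfl, fun _ _ _ => rfl⟩
    intro j hj
    rw [hbX j (by omega)]
    simp [X1, hj]
  · intro j hj hj'
    simp only at hj' ⊢
    by_cases hja : j < a.k
    · rw [hX0 j hja, hbX j hja]
      have : ¬ j < p1.k := by omega
      simp only [X1, this, if_false]
      exact (fin3_add_ne _).symm
    · simp only [X0, hja, if_false]
      exact fin3_add_ne _

variable (T) in
/-- Below `p`, coordinate `s` is determined. -/
def Triv (p : Cond r) (s : Fin r) : Prop :=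
  ∀ q q', p.Ext q → p.Ext q' → Good T q → Good T q' → ∀ n, n < q.l → n < q'.l →
    q.Y s n = q'.Y s n

variable (T) in
def Agr (p0 p1 : Cond r) (s : Fin r) (N : ℕ) : Prop :=
  ∃ q0 q1, DExt p0 p1 q0 q1 ∧ Good T q0 ∧ Good T q1 ∧
    ∃ n, N ≤ n ∧ n < q0.l ∧ n < q1.l ∧ q0.Y s n = q1.Y s n

theorem split {p0 p1 : Cond r} (h0 : Good T p0) (h1 : Good T p1) (hk : p0.k = p1.k)
    (s : Fin r) (N : ℕ) : Agr T p0 p1 s N ∨ ∃ p, p0.Ext p ∧ Good T p ∧ Triv T p s := by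
  by_cases hA : Agr T p0 p1 s N
  · exact Or.inl hA
  right
  obtain ⟨p, hp, hpg, hpl⟩ := h0.density (max p0.l N) (le_max_left _ _)
  refine ⟨p, hp, hpg, ?_⟩
  intro q q' hq hq' hg hg' n hn hn'
  by_cases hnp : n < p.l
  · rw [hq.2.2.2 s n hnp, hq'.2.2.2 s n hnp]
  by_contra hne
  apply hA
  have hpk := hp.1
  have hqk := hq.1
  have hqk' := hq'.1
  choose th hth1 hth2 using fin3_third
  let K := max q.k q'.k
  let X1 : ℕ → Fin 3 := fun j => if j < p1.k then p1.X j else th (q.X j) (q'.X j)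
  have hg1 := h1.raise K X1 (by omega) (fun j hj => by simp [X1, hj])
  obtain ⟨b, hb, hbg, hbl⟩ := hg1.density (max p1.l (n + 1)) (le_max_left _ _)
  have hbk : K ≤ b.k := hb.1
  have hbX : ∀ j < K, b.X j = X1 j := hb.2.1
  have hbe : p1.Ext b := by
    refine ⟨by omega, ?_, hb.2.2⟩
    intro j hj
    rw [hbX j (by omega)]
    simp [X1, hj]
  have main : ∀ a : Cond r, p.Ext a → Good T a → a.k ≤ K → n < a.l →
      (∀ j, p1.k ≤ j → X1 j ≠ a.X j) → a.Y s n = b.Y s n → Agr T p0 p1 s N := by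
    intro a ha hag haK hna hd hab
    let X0 : ℕ → Fin 3 := fun j => if j < K then a.X j else b.X j + 1
    have hX0 : ∀ j < a.k, X0 j = a.X j := fun j hj => by
      have : j < K := by omega
      simp [X0, this]
    refine ⟨⟨b.k, X0, a.l, a.Y⟩, b, ⟨?_, hbe, rfl, ?_⟩, hag.raise _ _ (by omega) hX0, hbg,
      n, by omega, hna, by omega, hab⟩
    · exact (hp.trans ha).trans ⟨by simp only; omega, hX0, le_rfl, fun _ _ _ => rfl⟩
    · intro j hj hj'
      simp only
      by_cases hja : j < K
      · rw [hbX j hja]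
        simp only [X0, hja, if_true]
        exact (hd j (by omega)).symm
      · simp only [X0, hja, if_false]
        exact fin3_add_ne _
  rcases fin2_pig _ _ (b.Y s n) hne with h | h
  · refine main q hq hg (le_max_left _ _) hn (fun j hj => ?_) h
    have : ¬ j < p1.k := by omega
    simp only [X1, this, if_false]
    exact hth1 _ _
  · refine main q' hq' hg' (le_max_right _ _) hn' (fun j hj => ?_) h
    have : ¬ j < p1.k := by omega
    simp only [X1, this, if_false]
    exact hth2 _ _

theorem exists_base {p : Cond r} (hp : Good T p) :
    ∃ b, Good T b ∧ ∀ q0 q1, b.Ext q0 → b.Ext q1 → Good T q0 → Good T q1 → q0.k = q1.k →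
      ∀ s N, Agr T q0 q1 s N := by
  classical
  let F : Cond r → Finset (Fin r) := fun b => Finset.univ.filter (Triv T b)
  have hFm : ∀ b s, s ∈ F b ↔ Triv T b s := fun b s => by simp [F]
  let f : {b : Cond r // Good T b} → ℕ := fun b => r - (F b.1).card
  have hne : (Set.univ : Set {b : Cond r // Good T b}).Nonempty := ⟨⟨p, hp⟩, trivial⟩
  obtain ⟨⟨b, hb⟩, hmin⟩ : ∃ b, ∀ b', f b ≤ f b' :=
    ⟨Function.argminOn f Set.univ hne, fun b' => Function.argminOn_le f _ (Set.mem_univ b')⟩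
  refine ⟨b, hb, fun q0 q1 e0 e1 g0 g1 hk s N => ?_⟩
  rcases split g0 g1 hk s N with h | ⟨p', hp', hg', ht⟩
  · exact h
  have hbp := e0.trans hp'
  have hsub : F b ⊆ F p' := by
    intro i hi
    rw [hFm] at hi ⊢
    exact fun q q' hq hq' => hi q q' (hbp.trans hq) (hbp.trans hq')
  have hm : r - (F b).card ≤ r - (F p').card := hmin ⟨p', hg'⟩
  have hc : (F p').card ≤ r := by
    simpa using Finset.card_le_univ (F p')
  have heq := Finset.eq_of_subset_of_card_le hsub (by
    have := Finset.card_le_card hsub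
    omega)
  have hs : Triv T b s := by
    rw [← hFm, heq, hFm]; exact ht
  obtain ⟨a0, a1, hd, ga0, ga1, hl0, hl1, -⟩ :=
    dext_long g0 g1 hk (max (max q0.l q1.l) (N + 1)) (by omega) (by omega)
  exact ⟨a0, a1, hd, ga0, ga1, N, le_rfl, by omega, by omega,
    hs a0 a1 (e0.trans hd.1) (e1.trans hd.2.1) ga0 ga1 N (by omega) (by omega)⟩

/-- The step of the construction. -/
theorem exists_step {b : Cond r} (hb : ∀ q0 q1, b.Ext q0 → b.Ext q1 → Good T q0 → Good T q1 →
      q0.k = q1.k → ∀ s N, Agr T q0 q1 s N) {q0 q1 : Cond r} (e0 : b.Ext q0) (e1 : b.Ext q1)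
    (g0 : Good T q0) (g1 : Good T q1) (hk : q0.k = q1.k) (t : ℕ) (s : ℕ) :
    ∃ a0 a1, DExt q0 q1 a0 a1 ∧ Good T a0 ∧ Good T a1 ∧ a0.l = a1.l ∧ t < a0.l ∧ t < a0.k ∧
      ∃ n, ∀ h : s < r, t ≤ n ∧ n < a0.l ∧ a0.Y ⟨s, h⟩ n = a1.Y ⟨s, h⟩ n := by
  have long : ∀ c0 c1 : Cond r, DExt q0 q1 c0 c1 → Good T c0 → Good T c1 →
      ∃ a0 a1, DExt q0 q1 a0 a1 ∧ c0.Ext a0 ∧ c1.Ext a1 ∧ Good T a0 ∧ Good T a1 ∧ a0.l = a1.l ∧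
      t < a0.l ∧ t < a0.k := by
    intro c0 c1 hc h0 h1
    obtain ⟨a0, a1, hd, ga0, ga1, hl0, hl1, hK⟩ :=
      dext_long h0 h1 hc.2.2.1 (max (max c0.l c1.l) (t + 1)) (by omega) (by omega)
    exact ⟨a0, a1, hc.trans hd, hd.1, hd.2.1, ga0, ga1, by omega, by omega, by omega⟩
  by_cases hs : s < r
  · obtain ⟨c0, c1, hd, h0, h1, n, hn, hn0, hn1, hE⟩ := hb q0 q1 e0 e1 g0 g1 hk ⟨s, hs⟩ t
    obtain ⟨a0, a1, hD, x0, x1, ga0, ga1, hl, htl, htk⟩ := long c0 c1 hd h0 h1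
    refine ⟨a0, a1, hD, ga0, ga1, hl, htl, htk, n, fun _ => ⟨hn, ?_, ?_⟩⟩
    · exact lt_of_lt_of_le hn0 x0.2.2.1
    · rw [x0.2.2.2 _ _ hn0, x1.2.2.2 _ _ hn1, hE]
  · obtain ⟨a0, a1, hD, x0, x1, ga0, ga1, hl, htl, htk⟩ := long q0 q1
      ⟨.rfl' _, .rfl' _, hk, fun j a b => by omega⟩ g0 g1
    exact ⟨a0, a1, hD, ga0, ga1, hl, htl, htk, 0, fun h => absurd h hs⟩

end Comb

/-! ### Computability part: codes -/

section Codes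

open Nat.Partrec (Code)

def toO : Code → OCode
  | .zero => .zero
  | .succ => .succ
  | .left => .left
  | .right => .right
  | .pair a b => .pair (toO a) (toO b)
  | .comp a b => .comp (toO a) (toO b)
  | .prec a b => .prec (toO a) (toO b)
  | .rfind' a => .rfind' (toO a)

def ofO : OCode → Code
  | .zero => .zero
  | .succ => .succ
  | .left => .left
  | .right => .right
  | .oracle => .zero
  | .pair a b => .pair (ofO a) (ofO b)
  | .comp a b => .comp (ofO a) (ofO b)
  | .prec a b => .prec (ofO a) (ofO b)
  | .rfind' a => .rfind' (ofO a)

theorem oeval_toO (O : ℕ → ℕ) (c : Code) : oeval O (toO c) = c.eval := by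
  induction c with
  | zero => rfl
  | succ => rfl
  | left => rfl
  | right => rfl
  | pair a b ha hb => rw [toO, oeval, Code.eval, ha, hb]
  | comp a b ha hb => rw [toO, oeval, Code.eval, ha, hb]
  | prec a b ha hb => rw [toO, oeval, Code.eval, ha, hb]
  | rfind' a ha => rw [toO, oeval, Code.eval, ha]

theorem eval_ofO (c : OCode) : (ofO c).eval = oeval zeroO c := by
  induction c with
  | zero => rfl
  | succ => rfl
  | left => rfl
  | right => rfl
  | oracle => rfl
  | pair a b ha hb => rw [ofO, oeval, Code.eval, ha, hb]
  | comp a b ha hb => rw [ofO, oeval, Code.eval, ha, hb]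
  | prec a b ha hb => rw [ofO, oeval, Code.eval, ha, hb]
  | rfind' a ha => rw [ofO, oeval, Code.eval, ha]

theorem oeval_comp (O : ℕ → ℕ) (c d : OCode) (n : ℕ) :
    oeval O (.comp c d) n = (oeval O d n).bind fun m => oeval O c m := rfl

theorem oeval_prec_zero (O : ℕ → ℕ) (c d : OCode) (a : ℕ) :
    oeval O (.prec c d) (Nat.pair a 0) = oeval O c a := by
  rw [oeval, Nat.unpaired, Nat.unpair_pair]
  rfl

theorem oeval_prec_succ (O : ℕ → ℕ) (c d : OCode) (a k : ℕ) :
    oeval O (.prec c d) (Nat.pair a (k + 1)) =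
      (oeval O (.prec c d) (Nat.pair a k)).bind
        fun i => oeval O d (Nat.pair a (Nat.pair k i)) := by
  rw [oeval, Nat.unpaired, Nat.unpair_pair, Nat.unpaired, Nat.unpair_pair]
  rfl

theorem oeval_rfind (O : ℕ → ℕ) (c : OCode) (a : ℕ) (F : ℕ → ℕ) (v : ℕ)
    (hc : ∀ k, oeval O c (Nat.pair a k) = Part.some (F k))
    (hv : F v = 0) (hm : ∀ k < v, F k ≠ 0) :
    oeval O (.rfind' c) (Nat.pair a 0) = Part.some v := by
  rw [oeval, Nat.unpaired, Nat.unpair_pair]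
  have h : v ∈ Nat.rfind (fun n => (oeval O c (Nat.pair a n)).map (fun m => decide (m = 0))) := by
    refine Nat.mem_rfind.2 ⟨?_, fun {k} hk => ?_⟩
    · rw [hc]; simp [hv]
    · rw [hc]; simp [hm k hk]
  have h2 := Part.mem_map (fun x => x + 0) h
  exact Part.eq_some_iff.2 h2

theorem encodeOCode_inj : ∀ a b : OCode, encodeOCode a = encodeOCode b → a = b := by
  intro a
  induction a with
  | zero => intro b h; cases b <;> simp [encodeOCode] at h ⊢
  | succ => intro b h; cases b <;> simp [encodeOCode] at h ⊢
  | left => intro b h; cases b <;> simp [encodeOCode] at h ⊢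
  | right => intro b h; cases b <;> simp [encodeOCode] at h ⊢
  | oracle => intro b h; cases b <;> simp [encodeOCode] at h ⊢
  | pair x y hx hy =>
    intro b h
    cases b <;> simp only [encodeOCode] at h <;> try omega
    have h' := Nat.pair_eq_pair.1
      (Nat.eq_of_mul_eq_mul_left (show 0 < 4 by norm_num) (Nat.add_right_cancel h))
    rw [hx _ h'.1, hy _ h'.2]
  | comp x y hx hy =>
    intro b h
    cases b <;> simp only [encodeOCode] at h <;> try omega
    have h' := Nat.pair_eq_pair.1
      (Nat.eq_of_mul_eq_mul_left (show 0 < 4 by norm_num) (Nat.add_right_cancel h))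
    rw [hx _ h'.1, hy _ h'.2]
  | prec x y hx hy =>
    intro b h
    cases b <;> simp only [encodeOCode] at h <;> try omega
    have h' := Nat.pair_eq_pair.1
      (Nat.eq_of_mul_eq_mul_left (show 0 < 4 by norm_num) (Nat.add_right_cancel h))
    rw [hx _ h'.1, hy _ h'.2]
  | rfind' x hx =>
    intro b h
    cases b <;> simp only [encodeOCode] at h <;> try omega
    rw [hx _ (Nat.eq_of_mul_eq_mul_left (show 0 < 4 by norm_num) (Nat.add_right_cancel h))]

variable {O : ℕ → ℕ}

theorem exists_ocode {f : ℕ →. ℕ} (hf : Nat.Partrec f) : ∃ c : OCode, ∀ O, oeval O c = f := by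
  obtain ⟨c, hc⟩ := Code.exists_code.1 hf
  exact ⟨toO c, fun O => by rw [oeval_toO, hc]⟩

theorem recIn_of_computable {f : ℕ → ℕ} (hf : Computable f) : RecIn O f := by
  obtain ⟨c, hc⟩ := exists_ocode (Partrec.nat_iff.1 hf)
  exact ⟨c, fun n => by rw [hc]; rfl⟩

theorem computable_of_recIn {f : ℕ → ℕ} (hf : RecIn zeroO f) : Computable f := by
  obtain ⟨c, hc⟩ := hf
  have h : Nat.Partrec (oeval zeroO c) := Code.exists_code.2 ⟨ofO c, eval_ofO c⟩
  have h2 : oeval zeroO c = (f : ℕ →. ℕ) := by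
    funext n; rw [hc]; rfl
  rw [h2] at h
  exact Partrec.nat_iff.2 h

theorem RecIn.comp {f g : ℕ → ℕ} (hf : RecIn O f) (hg : RecIn O g) : RecIn O (fun n => f (g n)) := by
  obtain ⟨c, hc⟩ := hf
  obtain ⟨d, hd⟩ := hg
  refine ⟨.comp c d, fun n => ?_⟩
  rw [oeval_comp, hd, Part.bind_some, hc]

theorem RecIn.pair {f g : ℕ → ℕ} (hf : RecIn O f) (hg : RecIn O g) :
    RecIn O (fun n => Nat.pair (f n) (g n)) := by
  obtain ⟨c, hc⟩ := hf
  obtain ⟨d, hd⟩ := hg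
  refine ⟨.pair c d, fun n => ?_⟩
  simp [oeval, hd, hc, Seq.seq]

theorem recIn_oracle : RecIn O O := ⟨.oracle, fun _ => rfl⟩

/-- Least-search in the oracle. -/
theorem recIn_iter {F : ℕ → ℕ} (hF : RecIn O F) (g : ℕ → ℕ)
    (hg : ∀ t, F (Nat.pair (Nat.pair t (g t)) (g (t + 1))) = 0 ∧
      ∀ k < g (t + 1), F (Nat.pair (Nat.pair t (g t)) k) ≠ 0) : RecIn O g := by
  have h1 : RecIn O (fun w => F (Nat.pair w.unpair.1.unpair.2 w.unpair.2)) := by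
    refine hF.comp (recIn_of_computable (f := fun w => Nat.pair w.unpair.1.unpair.2 w.unpair.2) ?_)
    refine Primrec.to_comp ?_
    exact Primrec₂.natPair.comp
      (Primrec.snd.comp (Primrec.unpair.comp (Primrec.fst.comp Primrec.unpair)))
      (Primrec.snd.comp Primrec.unpair)
  obtain ⟨c, hc⟩ := h1
  obtain ⟨ci, hci⟩ := recIn_of_computable (O := O) (f := fun n => Nat.pair n 0)
    (Primrec₂.natPair.comp Primrec.id (Primrec.const 0)).to_comp
  obtain ⟨c0, hc0⟩ := recIn_of_computable (O := O) (f := fun _ => g 0) (Computable.const _)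
  have key : ∀ t, oeval O (.prec c0 (.comp (.rfind' c) ci)) (Nat.pair 0 t) = Part.some (g t) := by
    intro t
    induction t with
    | zero => rw [oeval_prec_zero, hc0]
    | succ t ih =>
      rw [oeval_prec_succ, ih, Part.bind_some, oeval_comp, hci, Part.bind_some]
      refine oeval_rfind O c _ (fun k => F (Nat.pair (Nat.pair t (g t)) k)) _ (fun k => ?_)
        (hg t).1 (hg t).2
      rw [hc]
      simp only [Nat.unpair_pair]
  obtain ⟨cp, hcp⟩ := recIn_of_computable (O := O) (f := fun n => Nat.pair 0 n)
    (Primrec₂.natPair.comp (Primrec.const 0) Primrec.id).to_comp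
  refine ⟨.comp (.prec c0 (.comp (.rfind' c) ci)) cp, fun n => ?_⟩
  rw [oeval_comp, hcp, Part.bind_some, key]

theorem pi1_recIn {R : ℕ → ℕ → Bool} (hR : Computable₂ R) :
    ∃ F, RecIn (chi emptyJump) F ∧ ∀ w, F w = 0 ↔ ∀ z, R w z = true := by
  have hp : Partrec (fun w => Nat.rfind fun z => Part.some (!R w z)) :=
    Partrec.rfind (Computable.partrec (Primrec.not.to_comp.comp₂ hR))
  obtain ⟨c, hc⟩ := exists_ocode (Partrec.nat_iff.1 hp)
  refine ⟨fun w => chi emptyJump (Nat.pair (encodeOCode c) w), ?_, fun w => ?_⟩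
  · exact recIn_oracle.comp (recIn_of_computable
      (Primrec₂.natPair.comp (Primrec.const _) Primrec.id).to_comp)
  · have hm : Nat.pair (encodeOCode c) w ∈ emptyJump ↔ ∃ z, R w z = false := by
      simp only [emptyJump, jump, Set.mem_ofPred_eq, Nat.unpair_pair]
      constructor
      · rintro ⟨d, hd, hdom⟩
        rw [encodeOCode_inj _ _ hd, hc] at hdom
        obtain ⟨n, hn, -⟩ := Nat.rfind_dom.1 hdom
        exact ⟨n, by simpa using hn⟩
      · rintro ⟨z, hz⟩
        refine ⟨c, rfl, ?_⟩
        rw [hc]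
        exact Nat.rfind_dom.2 ⟨z, by simp [hz], by simp⟩
    simp only [chi]
    by_cases h : Nat.pair (encodeOCode c) w ∈ emptyJump
    · rw [Set.indicator_of_mem h]
      obtain ⟨z, hz⟩ := hm.1 h
      simp only [one_ne_zero, false_iff]
      intro h'
      simp [h' z] at hz
    · rw [Set.indicator_of_notMem h]
      simp only [true_iff]
      intro z
      by_contra hz
      exact h (hm.2 ⟨z, by simpa using hz⟩)

theorem computable_bex {α : Type*} [Primcodable α] {B : α → ℕ} {p : α → ℕ → Bool}
    (hB : Computable B) (hp : Computable₂ p) :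
    ∃ f : α → Bool, Computable f ∧ ∀ a, f a = true ↔ ∃ m < B a, p a m = true := by
  refine ⟨fun a => Nat.rec false (fun m IH => IH || p a m) (B a), ?_, fun a => ?_⟩
  · refine Computable.nat_rec hB (Computable.const false)
      (h := fun a (q : ℕ × Bool) => q.2 || p a q.1) ?_
    exact Primrec.or.to_comp.comp (Computable.snd.comp Computable.snd)
      (hp.comp Computable.fst (Computable.fst.comp Computable.snd))
  · simp only
    generalize B a = n
    induction n with
    | zero => simp
    | succ n ih =>
      simp only [Bool.or_eq_true, ih]
      constructor
      · rintro (⟨m, hm, h⟩ | h)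
        · exact ⟨m, by omega, h⟩
        · exact ⟨n, by omega, h⟩
      · rintro ⟨m, hm, h⟩
        rcases Nat.lt_succ_iff_lt_or_eq.1 hm with h' | rfl
        · exact Or.inl ⟨m, h', h⟩
        · exact Or.inr h

end Codes

/-! ### Numeric coding of conditions -/

section Numeric

theorem mod_pow_eq_iff {b : ℕ} (hb : 0 < b) (x y k : ℕ) :
    x % b ^ k = y % b ^ k ↔ ∀ j < k, x / b ^ j % b = y / b ^ j % b := by
  induction k with
  | zero => simp [Nat.mod_one]
  | succ k ih =>
    have hpos : 0 < b ^ k := Nat.pow_pos hb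
    constructor
    · intro h
      have h1 : x % b ^ k = y % b ^ k := by
        have := congrArg (· % b ^ k) h
        simpa [Nat.mod_mod_of_dvd _ (pow_dvd_pow b (Nat.le_succ k))] using this
      rw [Nat.mod_pow_succ, Nat.mod_pow_succ, h1] at h
      have h2 : x / b ^ k % b = y / b ^ k % b :=
        Nat.eq_of_mul_eq_mul_left hpos (Nat.add_left_cancel h)
      intro j hj
      rcases Nat.lt_succ_iff_lt_or_eq.1 hj with h' | rfl
      · exact ih.1 h1 j h'
      · exact h2
    · intro h
      rw [Nat.mod_pow_succ, Nat.mod_pow_succ, h k (Nat.lt_succ_self k),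
        ih.2 fun j hj => h j (Nat.lt_succ_of_lt hj)]

theorem exists_dig {b : ℕ} (hb : 0 < b) (f : ℕ → ℕ) (hf : ∀ j, f j < b) (n : ℕ) :
    ∃ m < b ^ n, ∀ j < n, m / b ^ j % b = f j := by
  induction n with
  | zero => exact ⟨0, by simp, by simp⟩
  | succ n ih =>
    obtain ⟨m, hm, h⟩ := ih
    have hpos : 0 < b ^ n := Nat.pow_pos hb
    refine ⟨m + b ^ n * f n, ?_, ?_⟩
    · have := Nat.mul_le_mul_left (b ^ n) (Nat.succ_le_of_lt (hf n))
      rw [Nat.mul_succ] at this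
      rw [pow_succ]; omega
    · intro j hj
      rcases Nat.lt_succ_iff_lt_or_eq.1 hj with h' | rfl
      · rw [← h j h']
        refine (mod_pow_eq_iff hb _ _ n).1 ?_ j h'
        simp
      · rw [Nat.add_mul_div_left _ _ hpos, Nat.div_eq_of_lt hm, zero_add, Nat.mod_eq_of_lt (hf _)]

def XX (x : ℕ) : ℕ → Fin 3 := fun j => ⟨x / 3 ^ j % 3, Nat.mod_lt _ (by norm_num)⟩
def YY (r m : ℕ) : Fin r → ℕ → Fin 2 :=
  fun i j => ⟨m / 2 ^ (j * r + i) % 2, Nat.mod_lt _ (by norm_num)⟩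

theorem XX_agree (x y k : ℕ) : x % 3 ^ k = y % 3 ^ k ↔ ∀ j < k, XX x j = XX y j := by
  simp only [mod_pow_eq_iff (show 0 < 3 by norm_num), XX, Fin.mk.injEq]

theorem XX_surj (X : ℕ → Fin 3) (n : ℕ) : ∃ x, ∀ j < n, XX x j = X j := by
  obtain ⟨m, -, h⟩ := exists_dig (show 0 < 3 by norm_num) (fun j => (X j : ℕ)) (fun j => (X j).2) n
  exact ⟨m, fun j hj => Fin.ext (h j hj)⟩

theorem YY_agree (r x y l : ℕ) :
    x % 2 ^ (l * r) = y % 2 ^ (l * r) ↔ ∀ i, ∀ j < l, YY r x i j = YY r y i j := by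
  simp only [mod_pow_eq_iff (show 0 < 2 by norm_num), YY, Fin.mk.injEq]
  constructor
  · intro h i j hj
    refine h _ ?_
    have := Nat.mul_le_mul_right r (Nat.succ_le_of_lt hj)
    rw [Nat.succ_mul] at this
    have := i.2
    omega
  · intro h a ha
    have hr : 0 < r := by
      rcases Nat.eq_zero_or_pos r with rfl | h
      · simp at ha
      · exact h
    have := h ⟨a % r, Nat.mod_lt _ hr⟩ (a / r) ((Nat.div_lt_iff_lt_mul hr).2 ha)
    simpa [Nat.div_add_mod'] using this

theorem YY_surj {r : ℕ} (Y : Fin r → ℕ → Fin 2) (n : ℕ) :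
    ∃ m < 2 ^ (n * r), ∀ i, ∀ j < n, YY r m i j = Y i j := by
  rcases Nat.eq_zero_or_pos r with rfl | hr
  · exact ⟨0, by simp, fun i => i.elim0⟩
  obtain ⟨m, hm, h⟩ := exists_dig (show 0 < 2 by norm_num)
    (fun a => (Y ⟨a % r, Nat.mod_lt _ hr⟩ (a / r) : ℕ)) (fun j => Fin.is_lt _) (n * r)
  refine ⟨m, hm, fun i j hj => Fin.ext ?_⟩
  have hlt : j * r + i < n * r := by
    have := Nat.mul_le_mul_right r (Nat.succ_le_of_lt hj)
    rw [Nat.succ_mul] at this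
    have := i.2
    omega
  have h1 : (j * r + i) % r = i := by
    rw [Nat.mul_add_mod', Nat.mod_eq_of_lt i.2]
  have h2 : (j * r + i) / r = j := by
    rw [mul_comm, Nat.mul_add_div hr, Nat.div_eq_of_lt i.2, add_zero]
  have := h _ hlt
  simp only [h1, h2] at this
  exact this

theorem seg_eq {α : Type} (X : ℕ → α) (n : ℕ) : seg X n = (List.range n).map X := by
  apply List.ext_getElem <;> simp [seg]

theorem seg_congr {α : Type} {X X' : ℕ → α} {n : ℕ} (h : ∀ j < n, X j = X' j) :
    seg X n = seg X' n := by
  unfold seg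
  congr 1
  funext i
  exact h i i.2

theorem seg_prefix {α : Type} (X : ℕ → α) {m n : ℕ} (h : m ≤ n) : seg X m <+: seg X n := by
  obtain ⟨d, rfl⟩ := Nat.exists_eq_add_of_le h
  rw [seg_eq, seg_eq, List.range_add, List.map_append]
  exact List.prefix_append _ _

/-- The abstract tree of a cross-tree. -/
def tp {r : ℕ} (T : CrossTree r) : TP r where
  P X Y n := (seg X n, fun i => seg (Y i) n) ∈ T.mem
  mono X Y m n hmn h := by
    refine T.closed _ h _ (seg_prefix X hmn) (fun i => seg_prefix (Y i) hmn) ?_ ?_ <;>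
      simp [seg]
  loc X X' Y n hX h := by
    rw [← seg_congr hX]; exact h

theorem tp_locY {r : ℕ} (T : CrossTree r) (X : ℕ → Fin 3) {Y Y' : Fin r → ℕ → Fin 2} {n : ℕ}
    (h : ∀ i, ∀ j < n, Y i j = Y' i j) (hP : (tp T).P X Y n) : (tp T).P X Y' n := by
  have : (fun i => seg (Y i) n) = fun i => seg (Y' i) n := by
    funext i; exact seg_congr (h i)
  simp only [tp] at hP ⊢
  rw [← this]; exact hP

theorem encNode_inj {r : ℕ} {p q : Str3 × StrTup r} (h : encNode p = encNode q) : p = q := by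
  unfold encNode at h
  have h' := Nat.pair_eq_pair.1 h
  exact Prod.ext (Encodable.encode_injective h'.1)
    (List.ofFn_injective (Encodable.encode_injective h'.2))

theorem primrec_pow {α : Type*} [Primcodable α] (b : ℕ) {f : α → ℕ} (hf : Primrec f) :
    Primrec fun a => b ^ f a := by
  have h : Primrec₂ (fun a b : ℕ => a ^ b) := Primrec₂.unpaired'.1 Nat.Primrec.pow
  exact h.comp (Primrec.const b) hf

theorem primrec_XX : Primrec₂ XX := by
  refine Primrec.fin_val_iff.1 ?_
  exact Primrec.nat_mod.comp (Primrec.nat_div.comp Primrec.fst (primrec_pow 3 Primrec.snd))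
    (Primrec.const 3)

theorem primrec_YY (r : ℕ) (i : Fin r) : Primrec₂ (fun m j => YY r m i j) := by
  refine Primrec.fin_val_iff.1 ?_
  exact Primrec.nat_mod.comp (Primrec.nat_div.comp Primrec.fst
    (primrec_pow 2 (Primrec.nat_add.comp (Primrec.nat_mul.comp Primrec.snd (Primrec.const r))
      (Primrec.const _))))
    (Primrec.const 2)

theorem primrec_seg {α : Type} [Primcodable α] {f : ℕ → ℕ → α} (hf : Primrec₂ f) :
    Primrec₂ (fun x n => seg (f x) n) := by
  have : Primrec (fun p : ℕ × ℕ => (List.range p.2).map (f p.1)) :=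
    Primrec.list_map (Primrec.list_range.comp Primrec.snd)
      (hf.comp (Primrec.fst.comp Primrec.fst) Primrec.snd)
  exact this.of_eq fun p => (seg_eq _ _).symm

/-- Membership in the tree, for coded sequences. -/
theorem exists_tc {r : ℕ} {T : CrossTree r} (hT : TreeComputable T) :
    ∃ tc : ℕ × ℕ × ℕ → Bool, Computable tc ∧
      ∀ x m n, tc (x, m, n) = true ↔ (tp T).P (XX x) (YY r m) n := by
  have hc := computable_of_recIn hT
  set S := {n | ∃ p ∈ T.mem, encNode p = n} with hS
  have hn : Primrec (fun a : ℕ × ℕ × ℕ =>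
      encNode (r := r) (seg (XX a.1) a.2.2, fun i => seg (YY r a.2.1 i) a.2.2)) := by
    have h1 : Primrec (fun a : ℕ × ℕ × ℕ => seg (XX a.1) a.2.2) :=
      (primrec_seg primrec_XX).comp Primrec.fst (Primrec.snd.comp Primrec.snd)
    have h2 : Primrec (fun a : ℕ × ℕ × ℕ => List.ofFn fun i => seg (YY r a.2.1 i) a.2.2) :=
      Primrec.list_ofFn fun i => (primrec_seg (primrec_YY r i)).comp
        (Primrec.fst.comp Primrec.snd) (Primrec.snd.comp Primrec.snd)
    exact Primrec₂.natPair.comp (Primrec.encode.comp h1) (Primrec.encode.comp h2)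
  refine ⟨fun a => decide (chi S (encNode (r := r)
    (seg (XX a.1) a.2.2, fun i => seg (YY r a.2.1 i) a.2.2)) = 1), ?_, fun x m n => ?_⟩
  · exact (PrimrecRel.decide Primrec.eq).to_comp.comp (hc.comp hn.to_comp) (Computable.const 1)
  · refine decide_eq_true_iff.trans ?_
    simp only [tp]
    have : encNode (r := r) (seg (XX x) n, fun i => seg (YY r m i) n) ∈ S ↔
        (seg (XX x) n, fun i => seg (YY r m i) n) ∈ T.mem := by
      constructor
      · rintro ⟨p, hp, he⟩
        rw [← encNode_inj he]; exact hp
      · intro h; exact ⟨_, h, rfl⟩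
    rw [← this]
    simp only [chi]
    by_cases h : encNode (r := r) (seg (XX x) n, fun i => seg (YY r m i) n) ∈ S
    · rw [Set.indicator_of_mem h]; simp [h]
    · rw [Set.indicator_of_notMem h]; simp [h]

/-- Goodness, for coded conditions, is co-c.e. -/
theorem exists_goodR {r : ℕ} {T : CrossTree r} (hT : TreeComputable T) :
    ∃ gR : (ℕ × ℕ × ℕ × ℕ) × (ℕ × ℕ) → Bool, Computable gR ∧
      ∀ k x l m, Good (tp T) ⟨k, XX x, l, YY r m⟩ ↔ ∀ x' n, gR ((k, x, l, m), (x', n)) = true := by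
  obtain ⟨tc, htc, hspec⟩ := exists_tc hT
  -- input `((k, x, l, m), (x', n))`
  have pk : Primrec (fun a : (ℕ × ℕ × ℕ × ℕ) × (ℕ × ℕ) => a.1.1) := Primrec.fst.comp Primrec.fst
  have px : Primrec (fun a : (ℕ × ℕ × ℕ × ℕ) × (ℕ × ℕ) => a.1.2.1) :=
    Primrec.fst.comp (Primrec.snd.comp Primrec.fst)
  have pl : Primrec (fun a : (ℕ × ℕ × ℕ × ℕ) × (ℕ × ℕ) => a.1.2.2.1) :=
    Primrec.fst.comp (Primrec.snd.comp (Primrec.snd.comp Primrec.fst))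
  have pm : Primrec (fun a : (ℕ × ℕ × ℕ × ℕ) × (ℕ × ℕ) => a.1.2.2.2) :=
    Primrec.snd.comp (Primrec.snd.comp (Primrec.snd.comp Primrec.fst))
  have px' : Primrec (fun a : (ℕ × ℕ × ℕ × ℕ) × (ℕ × ℕ) => a.2.1) := Primrec.fst.comp Primrec.snd
  have pn : Primrec (fun a : (ℕ × ℕ × ℕ × ℕ) × (ℕ × ℕ) => a.2.2) := Primrec.snd.comp Primrec.snd
  have p2 : Primrec (fun a : (ℕ × ℕ × ℕ × ℕ) × (ℕ × ℕ) => 2 ^ (a.1.2.2.1 * r)) :=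
    primrec_pow 2 (Primrec.nat_mul.comp pl (Primrec.const r))
  obtain ⟨f, hf, hfs⟩ := computable_bex
    (B := fun a : (ℕ × ℕ × ℕ × ℕ) × (ℕ × ℕ) => 2 ^ ((a.2.2 + a.1.2.2.1) * r))
    (p := fun a m' => decide (m' % 2 ^ (a.1.2.2.1 * r) = a.1.2.2.2 % 2 ^ (a.1.2.2.1 * r)) &&
      tc (a.2.1, m', a.2.2))
    (primrec_pow 2 (Primrec.nat_mul.comp (Primrec.nat_add.comp pn pl) (Primrec.const r))).to_comp
    (by
      refine Primrec.and.to_comp.comp ?_ ?_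
      · refine Primrec.to_comp ((PrimrecRel.decide Primrec.eq).comp ?_ ?_)
        · exact Primrec.nat_mod.comp Primrec.snd (p2.comp Primrec.fst)
        · exact Primrec.nat_mod.comp (pm.comp Primrec.fst) (p2.comp Primrec.fst)
      · exact htc.comp ((px'.comp Primrec.fst).pair (Primrec.snd.pair (pn.comp Primrec.fst))).to_comp)
  refine ⟨fun a => !decide (a.2.1 % 3 ^ a.1.1 = a.1.2.1 % 3 ^ a.1.1) || f a, ?_, ?_⟩
  · refine Primrec.or.to_comp.comp (Primrec.not.to_comp.comp (Primrec.to_comp ?_)) hf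
    exact (PrimrecRel.decide Primrec.eq).comp (Primrec.nat_mod.comp px' (primrec_pow 3 pk))
      (Primrec.nat_mod.comp px (primrec_pow 3 pk))
  · intro k x l m
    have hR : (∀ x' n, (!decide (x' % 3 ^ k = x % 3 ^ k) || f ((k, x, l, m), (x', n))) = true) ↔
        ∀ x', (∀ j < k, XX x' j = XX x j) → ∀ n, ∃ m' < 2 ^ ((n + l) * r),
          (∀ i, ∀ j < l, YY r m' i j = YY r m i j) ∧ (tp T).P (XX x') (YY r m') n := by
      simp only [Bool.or_eq_true, hfs, Bool.and_eq_true, decide_eq_true_eq, hspec, YY_agree,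
        XX_agree, Bool.not_eq_true', decide_eq_false_iff_not]
      constructor
      · intro h x' hx' n
        exact (h x' n).resolve_left (fun h => h hx')
      · intro h x' n
        by_cases hx' : ∀ j < k, XX x' j = XX x j
        · exact Or.inr (h x' hx' n)
        · exact Or.inl hx'
    rw [hR]
    constructor
    · intro h x' hx' n
      obtain ⟨Y, hY, hP⟩ := h (XX x') hx' n
      obtain ⟨m', hm', hE⟩ := YY_surj Y (n + l)
      refine ⟨m', hm', fun i j hj => ?_, tp_locY T _ (fun i j hj => ?_) hP⟩
      · rw [hE i j (by omega)]; exact hY i j hj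
      · exact (hE i j (by omega)).symm
    · intro h X hX n
      obtain ⟨x', hx'⟩ := XX_surj X (n + k)
      simp only at hX
      obtain ⟨m', -, hm', hP⟩ := h x' (fun j hj => by rw [hx' j (by omega), hX j hj]) n
      exact ⟨YY r m', hm', (tp T).loc _ _ _ _ (fun j hj => hx' j (by omega)) hP⟩

end Numeric

/-! ### The construction -/

section Final

/-- States: `(k, l, x0, x1, m0, m1, n)`. -/
abbrev St := ℕ × ℕ × ℕ × ℕ × ℕ × ℕ × ℕ

def sk (S : St) : ℕ := S.1
def sl (S : St) : ℕ := S.2.1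
def sx0 (S : St) : ℕ := S.2.2.1
def sx1 (S : St) : ℕ := S.2.2.2.1
def sm0 (S : St) : ℕ := S.2.2.2.2.1
def sm1 (S : St) : ℕ := S.2.2.2.2.2.1
def sn (S : St) : ℕ := S.2.2.2.2.2.2

theorem psk : Primrec sk := Primrec.fst
theorem psl : Primrec sl := Primrec.fst.comp Primrec.snd
theorem psx0 : Primrec sx0 := Primrec.fst.comp (Primrec.snd.comp Primrec.snd)
theorem psx1 : Primrec sx1 :=
  Primrec.fst.comp (Primrec.snd.comp (Primrec.snd.comp Primrec.snd))
theorem psm0 : Primrec sm0 :=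
  Primrec.fst.comp (Primrec.snd.comp (Primrec.snd.comp (Primrec.snd.comp Primrec.snd)))
theorem psm1 : Primrec sm1 :=
  Primrec.fst.comp (Primrec.snd.comp (Primrec.snd.comp (Primrec.snd.comp
    (Primrec.snd.comp Primrec.snd))))
theorem psn : Primrec sn :=
  Primrec.snd.comp (Primrec.snd.comp (Primrec.snd.comp (Primrec.snd.comp
    (Primrec.snd.comp Primrec.snd))))

variable {r : ℕ}

def c0 (r : ℕ) (S : St) : Cond r := ⟨sk S, XX (sx0 S), sl S, YY r (sm0 S)⟩
def c1 (r : ℕ) (S : St) : Cond r := ⟨sk S, XX (sx1 S), sl S, YY r (sm1 S)⟩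

/-- One step of the construction. -/
def Step (T : CrossTree r) (t : ℕ) (S S' : St) : Prop :=
  DExt (c0 r S) (c1 r S) (c0 r S') (c1 r S') ∧ Good (tp T) (c0 r S') ∧ Good (tp T) (c1 r S') ∧
    t < sl S' ∧ t < sk S' ∧ ∀ h : t % r < r, t ≤ sn S' ∧ sn S' < sl S' ∧
      YY r (sm0 S') ⟨t % r, h⟩ (sn S') = YY r (sm1 S') ⟨t % r, h⟩ (sn S')

/-- The decidable part of a step. -/
def Stat (r : ℕ) (a : (ℕ × St × St) × ℕ) : Prop :=
  (sk a.1.2.1 ≤ sk a.1.2.2 ∧ sl a.1.2.1 ≤ sl a.1.2.2) ∧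
  (sx0 a.1.2.2 % 3 ^ sk a.1.2.1 = sx0 a.1.2.1 % 3 ^ sk a.1.2.1 ∧
    sx1 a.1.2.2 % 3 ^ sk a.1.2.1 = sx1 a.1.2.1 % 3 ^ sk a.1.2.1) ∧
  (sm0 a.1.2.2 % 2 ^ (sl a.1.2.1 * r) = sm0 a.1.2.1 % 2 ^ (sl a.1.2.1 * r) ∧
    sm1 a.1.2.2 % 2 ^ (sl a.1.2.1 * r) = sm1 a.1.2.1 % 2 ^ (sl a.1.2.1 * r)) ∧
  (a.1.1 < sl a.1.2.2 ∧ a.1.1 < sk a.1.2.2) ∧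
  (¬ a.1.1 % r < r ∨ (a.1.1 ≤ sn a.1.2.2 ∧ sn a.1.2.2 < sl a.1.2.2 ∧
    sm0 a.1.2.2 / 2 ^ (sn a.1.2.2 * r + a.1.1 % r) % 2 =
      sm1 a.1.2.2 / 2 ^ (sn a.1.2.2 * r + a.1.1 % r) % 2)) ∧
  (¬ sk a.1.2.1 ≤ a.2 ∨ ¬ a.2 < sk a.1.2.2 ∨
    ¬ sx0 a.1.2.2 / 3 ^ a.2 % 3 = sx1 a.1.2.2 / 3 ^ a.2 % 3)

theorem primrec_stat (r : ℕ) : PrimrecPred (Stat r) := by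
  have pt : Primrec (fun a : (ℕ × St × St) × ℕ => a.1.1) := Primrec.fst.comp Primrec.fst
  have pS : Primrec (fun a : (ℕ × St × St) × ℕ => a.1.2.1) :=
    Primrec.fst.comp (Primrec.snd.comp Primrec.fst)
  have pS' : Primrec (fun a : (ℕ × St × St) × ℕ => a.1.2.2) :=
    Primrec.snd.comp (Primrec.snd.comp Primrec.fst)
  have pj : Primrec (fun a : (ℕ × St × St) × ℕ => a.2) := Primrec.snd
  have p3 := primrec_pow 3 (psk.comp pS)
  have p2 := primrec_pow 2 (Primrec.nat_mul.comp (psl.comp pS) (Primrec.const r))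
  have ptr := Primrec.nat_mod.comp pt (Primrec.const r)
  have pb := primrec_pow 2 (Primrec.nat_add.comp
    (Primrec.nat_mul.comp (psn.comp pS') (Primrec.const r)) ptr)
  have p3j := primrec_pow 3 pj
  refine .and (.and ?_ ?_) (.and (.and ?_ ?_) (.and (.and ?_ ?_) (.and (.and ?_ ?_)
    (.and (.or (.not ?_) (.and ?_ (.and ?_ ?_))) (.or (.not ?_) (.or (.not ?_) (.not ?_)))))))
  · exact Primrec.nat_le.comp (psk.comp pS) (psk.comp pS')
  · exact Primrec.nat_le.comp (psl.comp pS) (psl.comp pS')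
  · exact Primrec.eq.comp (Primrec.nat_mod.comp (psx0.comp pS') p3)
      (Primrec.nat_mod.comp (psx0.comp pS) p3)
  · exact Primrec.eq.comp (Primrec.nat_mod.comp (psx1.comp pS') p3)
      (Primrec.nat_mod.comp (psx1.comp pS) p3)
  · exact Primrec.eq.comp (Primrec.nat_mod.comp (psm0.comp pS') p2)
      (Primrec.nat_mod.comp (psm0.comp pS) p2)
  · exact Primrec.eq.comp (Primrec.nat_mod.comp (psm1.comp pS') p2)
      (Primrec.nat_mod.comp (psm1.comp pS) p2)
  · exact Primrec.nat_lt.comp pt (psl.comp pS')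
  · exact Primrec.nat_lt.comp pt (psk.comp pS')
  · exact Primrec.nat_lt.comp ptr (Primrec.const r)
  · exact Primrec.nat_le.comp pt (psn.comp pS')
  · exact Primrec.nat_lt.comp (psn.comp pS') (psl.comp pS')
  · exact Primrec.eq.comp
      (Primrec.nat_mod.comp (Primrec.nat_div.comp (psm0.comp pS') pb) (Primrec.const 2))
      (Primrec.nat_mod.comp (Primrec.nat_div.comp (psm1.comp pS') pb) (Primrec.const 2))
  · exact Primrec.nat_le.comp (psk.comp pS) pj
  · exact Primrec.nat_lt.comp pj (psk.comp pS')
  · exact Primrec.eq.comp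
      (Primrec.nat_mod.comp (Primrec.nat_div.comp (psx0.comp pS') p3j) (Primrec.const 3))
      (Primrec.nat_mod.comp (Primrec.nat_div.comp (psx1.comp pS') p3j) (Primrec.const 3))

theorem step_iff (T : CrossTree r) (t : ℕ) (S S' : St) :
    Step T t S S' ↔ (∀ j, Stat r ((t, S, S'), j)) ∧
      Good (tp T) (c0 r S') ∧ Good (tp T) (c1 r S') := by
  simp only [Step, Stat, XX_agree, YY_agree, DExt, Cond.Ext, c0, c1, YY, Fin.mk.injEq]
  have hne : ∀ j, XX (sx0 S') j ≠ XX (sx1 S') j ↔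
      ¬ sx0 S' / 3 ^ j % 3 = sx1 S' / 3 ^ j % 3 := fun j => by simp [XX]
  simp only [hne]
  constructor
  · rintro ⟨⟨⟨a1, a2, a3, a4⟩, ⟨-, b2, -, b4⟩, -, d⟩, g0, g1, h1, h2, h3⟩
    refine ⟨fun j => ⟨⟨a1, a3⟩, ⟨a2, b2⟩, ⟨a4, b4⟩, ⟨h1, h2⟩, ?_, ?_⟩, g0, g1⟩
    · by_cases h : t % r < r
      · exact Or.inr (h3 h)
      · exact Or.inl h
    · by_cases h : sk S ≤ j
      · by_cases h' : j < sk S'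
        · exact Or.inr (Or.inr (d j h h'))
        · exact Or.inr (Or.inl h')
      · exact Or.inl h
  · rintro ⟨h, g0, g1⟩
    obtain ⟨⟨a1, a3⟩, ⟨a2, b2⟩, ⟨a4, b4⟩, ⟨h1, h2⟩, h3, -⟩ := h 0
    refine ⟨⟨⟨a1, a2, a3, a4⟩, ⟨a1, b2, a3, b4⟩, trivial, fun j hj hj' => ?_⟩, g0, g1, h1, h2,
      fun h => h3.resolve_left (fun h' => h' h)⟩
    obtain ⟨-, -, -, -, -, hd⟩ := h j
    exact (hd.resolve_left (fun h => h hj)).resolve_left (fun h => h hj')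

/-- Search for a step is computable in `∅′`. -/
theorem exists_stepF {T : CrossTree r} (hT : TreeComputable T) :
    ∃ F, RecIn (chi emptyJump) F ∧ ∀ t (S S' : St),
      F (Nat.pair (Nat.pair t (Encodable.encode S)) (Encodable.encode S')) = 0 ↔ Step T t S S' := by
  classical
  obtain ⟨gR, hgR, hgs⟩ := exists_goodR hT
  let dw : ℕ → ℕ × St × St := fun w =>
    (w.unpair.1.unpair.1, Denumerable.ofNat St w.unpair.1.unpair.2, Denumerable.ofNat St w.unpair.2)
  let dz : ℕ → ℕ × ℕ × ℕ := Denumerable.ofNat (ℕ × ℕ × ℕ)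
  have hdw : Primrec dw := by
    have u1 : Primrec (fun w : ℕ => w.unpair.1) := Primrec.fst.comp Primrec.unpair
    have u2 : Primrec (fun w : ℕ => w.unpair.2) := Primrec.snd.comp Primrec.unpair
    exact (u1.comp u1).pair (((Primrec.ofNat St).comp (u2.comp u1)).pair
      ((Primrec.ofNat St).comp u2))
  have hdz : Primrec dz := Primrec.ofNat _
  have pd : Primrec (fun a : ℕ × ℕ => dw a.1) := hdw.comp Primrec.fst
  have pS' : Primrec (fun a : ℕ × ℕ => (dw a.1).2.2) := Primrec.snd.comp (Primrec.snd.comp pd)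
  have pz : Primrec (fun a : ℕ × ℕ => dz a.2) := hdz.comp Primrec.snd
  have pz2 : Primrec (fun a : ℕ × ℕ => (dz a.2).2) := Primrec.snd.comp pz
  let R : ℕ → ℕ → Bool := fun w z =>
    decide (Stat r (dw w, (dz z).1)) &&
    (gR ((sk (dw w).2.2, sx0 (dw w).2.2, sl (dw w).2.2, sm0 (dw w).2.2), (dz z).2) &&
    gR ((sk (dw w).2.2, sx1 (dw w).2.2, sl (dw w).2.2, sm1 (dw w).2.2), (dz z).2))
  have hR : Computable₂ R := by
    refine Primrec.and.to_comp.comp (Primrec.to_comp ?_) (Primrec.and.to_comp.comp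
      (hgR.comp (Primrec.to_comp ?_)) (hgR.comp (Primrec.to_comp ?_)))
    · exact (primrec_stat r).decide.comp (pd.pair (Primrec.fst.comp pz))
    · exact ((psk.comp pS').pair ((psx0.comp pS').pair ((psl.comp pS').pair (psm0.comp pS')))).pair pz2
    · exact ((psk.comp pS').pair ((psx1.comp pS').pair ((psl.comp pS').pair (psm1.comp pS')))).pair pz2
  obtain ⟨F, hF, hFs⟩ := pi1_recIn hR
  refine ⟨F, hF, fun t S S' => ?_⟩
  rw [hFs, step_iff]
  have hd : dw (Nat.pair (Nat.pair t (Encodable.encode S)) (Encodable.encode S')) = (t, S, S') := by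
    simp only [dw, Nat.unpair_pair, Denumerable.ofNat_encode]
  have hzs : ∀ p : ℕ × ℕ × ℕ → Prop, (∀ z, p (dz z)) ↔ ∀ a b c, p (a, b, c) := by
    intro p
    constructor
    · intro h a b c
      have := h (Encodable.encode (a, b, c))
      simpa only [dz, Denumerable.ofNat_encode] using this
    · intro h z
      exact h (dz z).1 (dz z).2.1 (dz z).2.2
  simp only [R, hd, c0, c1, hgs, Bool.and_eq_true, decide_eq_true_eq]
  rw [hzs fun q => Stat r ((t, S, S'), q.1) ∧ gR ((sk S', sx0 S', sl S', sm0 S'), q.2) = true ∧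
    gR ((sk S', sx1 S', sl S', sm1 S'), q.2) = true]
  constructor
  · intro h
    exact ⟨fun j => (h j 0 0).1, fun x n => (h 0 x n).2.1, fun x n => (h 0 x n).2.2⟩
  · rintro ⟨h1, h2, h3⟩ a b c
    exact ⟨h1 a, h2 b c, h3 b c⟩

theorem Good.congr {T : TP r} {p q : Cond r} (h : Good T p) (hk : p.k = q.k) (hl : p.l = q.l)
    (hX : ∀ j < p.k, q.X j = p.X j) (hY : ∀ i, ∀ j < p.l, q.Y i j = p.Y i j) : Good T q := by
  intro X hX' n
  obtain ⟨Y, h1, h2⟩ := h X (fun j hj => by rw [hX' j (by omega), hX j hj]) n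
  exact ⟨Y, fun i j hj => by rw [h1 i j (by omega), hY i j (by omega)], h2⟩

/-- Every pair of conditions is represented by a state. -/
theorem exists_state (a0 a1 : Cond r) (hk : a0.k = a1.k) (hl : a0.l = a1.l) (n : ℕ) :
    ∃ S : St, sk S = a0.k ∧ sl S = a0.l ∧ sn S = n ∧
      (∀ j < a0.k, (c0 r S).X j = a0.X j) ∧ (∀ j < a1.k, (c1 r S).X j = a1.X j) ∧
      (∀ i, ∀ j < a0.l, (c0 r S).Y i j = a0.Y i j) ∧
      (∀ i, ∀ j < a1.l, (c1 r S).Y i j = a1.Y i j) := by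
  obtain ⟨x0, hx0⟩ := XX_surj a0.X a0.k
  obtain ⟨x1, hx1⟩ := XX_surj a1.X a1.k
  obtain ⟨m0, -, hm0⟩ := YY_surj a0.Y a0.l
  obtain ⟨m1, -, hm1⟩ := YY_surj a1.Y a1.l
  exact ⟨(a0.k, a0.l, x0, x1, m0, m1, n), rfl, rfl, rfl, hx0, hx1, hm0, hm1⟩

/-- A computable sequence of states, each a step of the previous one. -/
theorem exists_seq (T : CrossTree r) (hcomp : TreeComputable T) (hfull : LeftFull T) :
    ∃ g : ℕ → St, RecIn (chi emptyJump) (fun t => Encodable.encode (g t)) ∧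
      ∀ t, Step T t (g t) (g (t + 1)) := by
  classical
  obtain ⟨F, hF, hFs⟩ := exists_stepF hcomp
  have hbase : Good (tp T) ⟨0, fun _ => 0, 0, fun _ _ => 0⟩ := by
    intro X _ n
    obtain ⟨Y, -, hY⟩ := hfull X (fun i => i.elim0)
    exact ⟨Y, fun i j hj => absurd hj (Nat.not_lt_zero _), hY n⟩
  obtain ⟨b, hb, hAgr⟩ := exists_base hbase
  let V : St → Prop := fun S => b.Ext (c0 r S) ∧ b.Ext (c1 r S) ∧ Good (tp T) (c0 r S) ∧
    Good (tp T) (c1 r S)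
  have hVstep : ∀ t S S', V S → Step T t S S' → V S' := by
    rintro t S S' ⟨e0, e1, -, -⟩ ⟨hd, g0, g1, -⟩
    exact ⟨e0.trans hd.1, e1.trans hd.2.1, g0, g1⟩
  have hex : ∀ t S, V S → ∃ S', Step T t S S' := by
    rintro t S ⟨e0, e1, g0, g1⟩
    obtain ⟨a0, a1, hd, ga0, ga1, hl, htl, htk, n, hn⟩ :=
      exists_step hAgr e0 e1 g0 g1 rfl t (t % r)
    have hk := hd.2.2.1
    obtain ⟨S', hk', hl', hn', hx0, hx1, hy0, hy1⟩ := exists_state a0 a1 hk hl n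
    have E0 : a0.Ext (c0 r S') := ⟨hk'.ge, hx0, hl'.ge, hy0⟩
    have E1 : a1.Ext (c1 r S') :=
      ⟨(hk'.trans hk).ge, hx1, (hl'.trans hl).ge, hy1⟩
    refine ⟨S', ⟨hd.1.trans E0, hd.2.1.trans E1, rfl, fun j hj hj' => ?_⟩,
      ga0.congr hk'.symm hl'.symm hx0 hy0,
      ga1.congr (hk'.trans hk).symm (hl'.trans hl).symm hx1 hy1, by omega, by omega, fun h => ?_⟩
    · have hj2 : j < a0.k := hk' ▸ hj'
      rw [hx0 j hj2, hx1 j (hk ▸ hj2)]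
      exact hd.2.2.2 j hj hj2
    · obtain ⟨h1, h2, h3⟩ := hn h
      rw [hn', hl']
      refine ⟨h1, h2, ?_⟩
      exact (hy0 _ n h2).trans (h3.trans (hy1 _ n (hl ▸ h2)).symm)
  obtain ⟨S0, hS0⟩ : ∃ S, V S := by
    obtain ⟨S, hk', hl', -, hx0, hx1, hy0, hy1⟩ := exists_state b b rfl rfl 0
    exact ⟨S, ⟨hk'.ge, hx0, hl'.ge, hy0⟩, ⟨hk'.ge, hx1, hl'.ge, hy1⟩,
      hb.congr hk'.symm hl'.symm hx0 hy0, hb.congr hk'.symm hl'.symm hx1 hy1⟩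
  have hnext : ∀ t S, ∃ S', V S → Step T t S S' ∧
      ∀ k < Encodable.encode S', ¬ Step T t S (Denumerable.ofNat St k) := by
    intro t S
    by_cases hV : V S
    · have hE : ∃ k, Step T t S (Denumerable.ofNat St k) := by
        obtain ⟨S', h⟩ := hex t S hV
        exact ⟨Encodable.encode S', by simpa only [Denumerable.ofNat_encode] using h⟩
      refine ⟨Denumerable.ofNat St (Nat.find hE), fun _ => ⟨Nat.find_spec hE, fun k hk => ?_⟩⟩
      rw [Denumerable.encode_ofNat] at hk
      exact Nat.find_min hE hk
    · exact ⟨S0, fun h => absurd h hV⟩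
  choose nx hnx using hnext
  let g : ℕ → St := fun t => Nat.rec S0 (fun t S => nx t S) t
  have hgV : ∀ t, V (g t) := by
    intro t
    induction t with
    | zero => exact hS0
    | succ t ih => exact hVstep t _ _ ih (hnx t (g t) ih).1
  refine ⟨g, recIn_iter hF _ fun t => ⟨?_, fun k hk => ?_⟩, fun t => (hnx t (g t) (hgV t)).1⟩
  · exact (hFs t _ _).2 (hnx t (g t) (hgV t)).1
  · intro h0
    refine (hnx t (g t) (hgV t)).2 k hk ((hFs t _ _).1 ?_)
    rw [Denumerable.encode_ofNat]; exact h0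

/-- Reading off the value of the joined solution from the states. -/
def readOff (r : ℕ) (n : ℕ) (S : St) : ℕ :=
  if (n / 2).unpair.1 = 0 then
    (if n % 2 = 0 then sx0 S else sx1 S) / 3 ^ (n / 2).unpair.2 % 3
  else if (n / 2).unpair.1 - 1 < r then
    (if n % 2 = 0 then sm0 S else sm1 S) /
      2 ^ ((n / 2).unpair.2 * r + ((n / 2).unpair.1 - 1)) % 2
  else 0

theorem primrec_readOff (r : ℕ) : Primrec₂ (readOff r) := by
  have pn : Primrec (fun a : ℕ × St => a.1) := Primrec.fst
  have pS : Primrec (fun a : ℕ × St => a.2) := Primrec.snd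
  have ph : Primrec (fun a : ℕ × St => a.1 / 2) := Primrec.nat_div.comp pn (Primrec.const 2)
  have p1 : Primrec (fun a : ℕ × St => (a.1 / 2).unpair.1) :=
    Primrec.fst.comp (Primrec.unpair.comp ph)
  have p2 : Primrec (fun a : ℕ × St => (a.1 / 2).unpair.2) :=
    Primrec.snd.comp (Primrec.unpair.comp ph)
  have p1' : Primrec (fun a : ℕ × St => (a.1 / 2).unpair.1 - 1) :=
    Primrec.nat_sub.comp p1 (Primrec.const 1)
  have hpar : PrimrecPred (fun a : ℕ × St => a.1 % 2 = 0) :=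
    Primrec.eq.comp (Primrec.nat_mod.comp pn (Primrec.const 2)) (Primrec.const 0)
  refine Primrec.ite (Primrec.eq.comp p1 (Primrec.const 0)) ?_
    (Primrec.ite (Primrec.nat_lt.comp p1' (Primrec.const r)) ?_ (Primrec.const 0))
  · exact Primrec.nat_mod.comp (Primrec.nat_div.comp
      (Primrec.ite hpar (psx0.comp pS) (psx1.comp pS)) (primrec_pow 3 p2)) (Primrec.const 3)
  · exact Primrec.nat_mod.comp (Primrec.nat_div.comp
      (Primrec.ite hpar (psm0.comp pS) (psm1.comp pS))
      (primrec_pow 2 (Primrec.nat_add.comp (Primrec.nat_mul.comp p2 (Primrec.const r)) p1')))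
      (Primrec.const 2)

theorem path_of_good (T : CrossTree r) {X : ℕ → Fin 3} {Y : Fin r → ℕ → Fin 2}
    (h : ∀ n, ∃ p : Cond r, Good (tp T) p ∧ n ≤ p.l ∧ (∀ j < p.k, X j = p.X j) ∧
      ∀ i, ∀ j < p.l, Y i j = p.Y i j) : IsPath T X Y := by
  intro n
  obtain ⟨p, hp, hn, hX, hY⟩ := h n
  obtain ⟨Y', hY', hP⟩ := hp X hX n
  exact tp_locY T X (fun i j hj => by rw [hY' i j (by omega), hY i j (by omega)]) hP

end Final

/-- Cross-constraint Δ⁰₂ basis theorem: every left-full computable instance of the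
cross-constraint problem has a solution whose join is computable in `∅′`. -/
theorem cc_delta2_basis (r : ℕ) (T : CrossTree r)
    (hcomp : TreeComputable T) (hfull : LeftFull T) :
    ∃ (X : Fin 2 → ℕ → Fin 3) (Y : Fin 2 → Fin r → ℕ → Fin 2),
      CCSolution T X Y ∧
      RecIn (chi emptyJump) (joinF (solOracle (X 0) (Y 0)) (solOracle (X 1) (Y 1))) := by
  obtain ⟨g, hg, hs⟩ := exists_seq T hcomp hfull
  have hD : ∀ t t', t ≤ t' →
      DExt (c0 r (g t)) (c1 r (g t)) (c0 r (g t')) (c1 r (g t')) := by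
    intro t t' h
    induction t', h using Nat.le_induction with
    | base => exact ⟨.rfl' _, .rfl' _, rfl, fun j a b => by omega⟩
    | succ t' _ ih => exact ih.trans (hs t').1
  have hk : ∀ t, t < sk (g (t + 1)) := fun t => (hs t).2.2.2.2.1
  have hl : ∀ t, t < sl (g (t + 1)) := fun t => (hs t).2.2.2.1
  let X0 : ℕ → Fin 3 := fun j => (c0 r (g (j + 1))).X j
  let X1 : ℕ → Fin 3 := fun j => (c1 r (g (j + 1))).X j
  let Y0 : Fin r → ℕ → Fin 2 := fun i j => (c0 r (g (j + 1))).Y i j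
  let Y1 : Fin r → ℕ → Fin 2 := fun i j => (c1 r (g (j + 1))).Y i j
  have hX0 : ∀ t, ∀ j < sk (g t), X0 j = (c0 r (g t)).X j := by
    intro t j hj
    rcases le_total t (j + 1) with h | h
    · exact (hD _ _ h).1.2.1 j hj
    · exact ((hD _ _ h).1.2.1 j (hk j)).symm
  have hX1 : ∀ t, ∀ j < sk (g t), X1 j = (c1 r (g t)).X j := by
    intro t j hj
    rcases le_total t (j + 1) with h | h
    · exact (hD _ _ h).2.1.2.1 j hj
    · exact ((hD _ _ h).2.1.2.1 j (hk j)).symm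
  have hY0 : ∀ t i, ∀ j < sl (g t), Y0 i j = (c0 r (g t)).Y i j := by
    intro t i j hj
    rcases le_total t (j + 1) with h | h
    · exact (hD _ _ h).1.2.2.2 i j hj
    · exact ((hD _ _ h).1.2.2.2 i j (hl j)).symm
  have hY1 : ∀ t i, ∀ j < sl (g t), Y1 i j = (c1 r (g t)).Y i j := by
    intro t i j hj
    rcases le_total t (j + 1) with h | h
    · exact (hD _ _ h).2.1.2.2.2 i j hj
    · exact ((hD _ _ h).2.1.2.2.2 i j (hl j)).symm
  refine ⟨![X0, X1], ![Y0, Y1], ⟨?_, ?_, ?_⟩, ?_⟩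
  · intro i
    fin_cases i
    · exact path_of_good T fun n => ⟨c0 r (g (n + 1)), (hs n).2.1, (hl n).le, hX0 _, hY0 _⟩
    · exact path_of_good T fun n => ⟨c1 r (g (n + 1)), (hs n).2.2.1, (hl n).le, hX1 _, hY1 _⟩
  · intro j
    refine (Set.finite_Iio (sk (g 0))).subset ?_
    rintro n ⟨h0, h1⟩
    by_contra hn
    have hn' : sk (g 0) ≤ n := not_lt.1 hn
    refine (hD 0 (n + 1) (Nat.zero_le _)).2.2.2 n hn' (hk n) ?_
    exact (show X0 n = j from h0).trans (show X1 n = j from h1).symm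
  · intro s
    have hinf : {n | Y0 s n = Y1 s n}.Infinite := by
      refine Set.infinite_of_forall_exists_gt fun N => ?_
      have hmod : (s + r * (N + 1)) % r = s := by
        rw [Nat.add_mul_mod_self_left, Nat.mod_eq_of_lt s.2]
      have hlt : (s + r * (N + 1)) % r < r := by rw [hmod]; exact s.2
      have hfin : (⟨(s + r * (N + 1)) % r, hlt⟩ : Fin r) = s := Fin.ext hmod
      obtain ⟨h1, h2, h3⟩ := (hs (s + r * (N + 1))).2.2.2.2.2 hlt
      rw [hfin] at h3
      refine ⟨sn (g (s + r * (N + 1) + 1)), ?_, ?_⟩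
      · exact (hY0 _ s _ h2).trans (h3.trans (hY1 _ s _ h2).symm)
      · have : N + 1 ≤ r * (N + 1) := Nat.le_mul_of_pos_left (N + 1) s.pos
        omega
    by_contra hcon
    push Not at hcon
    refine hinf (((hcon 0).union (hcon 1)).subset ?_)
    intro n hn
    have hn' : Y0 s n = Y1 s n := hn
    have h01 : ∀ a : Fin 2, a = 0 ∨ a = 1 := by decide
    rcases h01 (Y0 s n) with h | h
    · exact Or.inl ⟨h, hn'.symm.trans h⟩
    · exact Or.inr ⟨h, hn'.symm.trans h⟩
  · have hfun : joinF (solOracle X0 Y0) (solOracle X1 Y1) =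
        fun n => readOff r n (g ((n / 2).unpair.2 + 1)) := by
      funext n
      simp only [joinF, solOracle, readOff, X0, X1, Y0, Y1, c0, c1, XX, YY]
      split_ifs <;> rfl
    have h1 : RecIn (chi emptyJump)
        (fun n => Encodable.encode (g ((n / 2).unpair.2 + 1))) :=
      hg.comp (recIn_of_computable (f := fun n => (n / 2).unpair.2 + 1)
        (Primrec.succ.comp (Primrec.snd.comp (Primrec.unpair.comp
          (Primrec.nat_div.comp Primrec.id (Primrec.const 2))))).to_comp)
    have h2 : RecIn (chi emptyJump)
        (fun w => readOff r w.unpair.1 (Denumerable.ofNat St w.unpair.2)) :=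
      recIn_of_computable ((primrec_readOff r).comp (Primrec.fst.comp Primrec.unpair)
        ((Primrec.ofNat St).comp (Primrec.snd.comp Primrec.unpair))).to_comp
    have h3 := h2.comp ((recIn_of_computable (f := fun n => n) Computable.id).pair h1)
    simp only [Nat.unpair_pair, Denumerable.ofNat_encode] at h3
    change RecIn (chi emptyJump) (joinF (solOracle X0 Y0) (solOracle X1 Y1))
    rw [hfun]
    exact h3

end Paper
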